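/- Assume the Loewner chain setup with 0 < σ < 8/π. Then, for every t ∈ [0,1], |Re γ(t)| ≤ (πσ/√(64 − π²σ²))·Im γ(t). -/

import Mathlib

open Set MeasureTheory intervalIntegral Real

/-!
Fix `T` and `y > 0`, write `ξ r = λ (T - r)`, and let `h` solve the backward equation
`h' = -2 / (h - ξ)` with `h 0 = λ T + i y`. The Loewner equation is a transport equation with
characteristics `h`, so `f T (λ T + i y) = h T` and it suffices to confine `h`.

Write `x = Re h`, `Y = Im h` and let `C` be the maximum of `|x - ξ| / Y`, attained at time `s`.
Since `(Y ^ 2)' = 4 Y ^ 2 / |h - ξ| ^ 2 ≥ 4 / (1 + C ^ 2)`, the Hölder bound on `ξ` becomes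
`|ξ - ξ s| ≤ σ / 2 * √(1 + C ^ 2) * √(Y s ^ 2 - Y ^ 2)` on `[0, s]`. On the other hand
`((x - ξ s) * Y)' = (ξ - ξ s) * Y'`, and integrating with `Y` as the variable bounds
`|x s - ξ s| * Y s` by `σ / 2 * √(1 + C ^ 2)` times the area `π * Y s ^ 2 / 4` of a quarter disc.
Hence `C ≤ π * σ / 8 * √(1 + C ^ 2)`, which is the claimed bound on `C`.
-/

lemma mapsTo_const_sub_Icc_zero (T : ℝ) : MapsTo (fun r ↦ T - r) (Icc 0 T) (Icc 0 T) :=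
  fun _ hr ↦ ⟨sub_nonneg.2 hr.2, sub_le_self T hr.1⟩

section BoundedHolomorphicFamilies

open Metric

variable {E : Type*} [NormedAddCommGroup E]

lemma mapsTo_closedBall_apply_of_mapsTo_closedBall_zero {X : Type*} {g : X → E} {S : Set X} {c : X}
    {M : ℝ} (hc : c ∈ S) (hg : MapsTo g S (closedBall 0 M)) :
    MapsTo g S (closedBall (g c) (2 * M)) := fun z hz ↦ by
  have hz' := mem_closedBall_zero_iff.1 (hg hz)
  have hc' := mem_closedBall_zero_iff.1 (hg hc)
  rw [mem_closedBall_iff_norm]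
  linarith [norm_sub_le (g z) (g c)]

variable [NormedSpace ℂ E] [CompleteSpace E]

-- The Schwarz lemma, first for `φ` and then for `dslope φ c`.
lemma norm_dslope_sub_deriv_le {φ : ℂ → E} {c w : ℂ} {R M : ℝ}
    (hφ : DifferentiableOn ℂ φ (ball c R)) (hM : MapsTo φ (ball c R) (closedBall 0 M))
    (hw : w ∈ ball c R) :
    ‖dslope φ c w - deriv φ c‖ ≤ 4 * M / R ^ 2 * ‖w - c‖ := by
  have hR : 0 < R := nonempty_ball.1 ⟨w, hw⟩
  have hc : c ∈ ball c R := mem_ball_self hR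
  have hslope : MapsTo (dslope φ c) (ball c R) (closedBall 0 (2 * M / R)) := fun z hz ↦
    mem_closedBall_zero_iff.2 <| Complex.norm_dslope_le_div_of_mapsTo_ball hφ
      (mapsTo_closedBall_apply_of_mapsTo_closedBall_zero hc hM) hz
  have hdiff : DifferentiableOn ℂ (dslope φ c) (ball c R) :=
    (Complex.differentiableOn_dslope (ball_mem_nhds c hR)).2 hφ
  have hschwarz := Complex.dist_le_div_mul_dist_of_mapsTo_ball hdiff
    (mapsTo_closedBall_apply_of_mapsTo_closedBall_zero hc hslope) hw
  rw [dslope_same, dist_eq_norm, dist_eq_norm] at hschwarz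
  convert hschwarz using 2
  field_simp
  ring

lemma continuousWithinAt_deriv_of_mapsTo_closedBall {X : Type*} [TopologicalSpace X]
    {F : X → ℂ → E} {S : Set X} {x : X} {c : ℂ} {R M : ℝ} (hR : 0 < R) (hx : x ∈ S)
    (hd : ∀ r ∈ S, DifferentiableOn ℂ (F r) (ball c R))
    (hM : ∀ r ∈ S, MapsTo (F r) (ball c R) (closedBall 0 M))
    (hF : ∀ z ∈ ball c R, ContinuousWithinAt (F · z) S x) :
    ContinuousWithinAt (fun r ↦ deriv (F r) c) S x := by
  refine continuousWithinAt_of_locally_uniform_approx_of_continuousWithinAt hx fun u hu ↦ ?_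
  obtain ⟨ε, hε, hεu⟩ := Metric.mem_uniformity_dist.1 hu
  have hsmall : ∀ᶠ w in nhdsWithin c {c}ᶜ, 4 * M / R ^ 2 * ‖w - c‖ < ε := by
    have : Continuous fun w ↦ 4 * M / R ^ 2 * ‖w - c‖ := by fun_prop
    exact nhdsWithin_le_nhds (this.continuousAt.eventually_lt_const (by simpa using hε))
  obtain ⟨w, ⟨hwε, hwR⟩, hwc⟩ := ((hsmall.and
    (nhdsWithin_le_nhds (ball_mem_nhds c hR))).and self_mem_nhdsWithin).exists
  refine ⟨S, self_mem_nhdsWithin, fun r ↦ dslope (F r) c w, ?_, fun r hr ↦ hεu ?_⟩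
  · simp only [dslope_of_ne _ hwc, slope_def_module]
    exact ((hF w hwR).sub (hF c (mem_ball_self hR))).const_smul _
  · rw [dist_comm, dist_eq_norm]
    exact (norm_dslope_sub_deriv_le (hd r hr) (hM r hr) hwR).trans_lt hwε

lemma tendsto_dslope_of_mapsTo_closedBall {X : Type*} [TopologicalSpace X]
    {F : X → ℂ → E} {S : Set X} {x : X} {c : ℂ} {R M : ℝ} {h : X → ℂ} (hR : 0 < R) (hx : x ∈ S)
    (hd : ∀ r ∈ S, DifferentiableOn ℂ (F r) (ball c R))
    (hM : ∀ r ∈ S, MapsTo (F r) (ball c R) (closedBall 0 M))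
    (hF : ∀ z ∈ ball c R, ContinuousWithinAt (F · z) S x)
    (hh : Filter.Tendsto h (nhdsWithin x S) (nhds c)) :
    Filter.Tendsto (fun r ↦ dslope (F r) c (h r)) (nhdsWithin x S) (nhds (deriv (F x) c)) := by
  have hbound : Filter.Tendsto (fun r ↦ 4 * M / R ^ 2 * ‖h r - c‖) (nhdsWithin x S) (nhds 0) := by
    simpa using ((hh.sub_const c).norm).const_mul (4 * M / R ^ 2)
  have hdiff : Filter.Tendsto (fun r ↦ dslope (F r) c (h r) - deriv (F r) c)
      (nhdsWithin x S) (nhds 0) := by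
    refine squeeze_zero_norm' ?_ hbound
    filter_upwards [hh (ball_mem_nhds c hR), self_mem_nhdsWithin] with r hr hrS
    exact norm_dslope_sub_deriv_le (hd r hrS) (hM r hrS) hr
  simpa using hdiff.add (continuousWithinAt_deriv_of_mapsTo_closedBall hR hx hd hM hF).tendsto

lemma hasDerivWithinAt_apply_of_mapsTo_closedBall {F : ℝ → ℂ → E} {h : ℝ → ℂ} {S : Set ℝ}
    {s R M : ℝ} {F' : E} {h' : ℂ} (hR : 0 < R) (hs : s ∈ S)
    (hd : ∀ r ∈ S, DifferentiableOn ℂ (F r) (ball (h s) R))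
    (hM : ∀ r ∈ S, MapsTo (F r) (ball (h s) R) (closedBall 0 M))
    (hF : ∀ z ∈ ball (h s) R, ContinuousWithinAt (F · z) S s)
    (hF' : HasDerivWithinAt (F · (h s)) F' S s) (hh : HasDerivWithinAt h h' S s) :
    HasDerivWithinAt (fun r ↦ F r (h r)) (F' + h' • deriv (F s) (h s)) S s := by
  have hslope := (tendsto_dslope_of_mapsTo_closedBall hR hs hd hM hF
    hh.continuousWithinAt).mono_left (nhdsWithin_mono s (sdiff_subset (t := {s})))
  rw [hasDerivWithinAt_iff_tendsto_slope] at hF' hh ⊢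
  refine (hF'.add (hh.smul hslope)).congr fun r ↦ ?_
  have hsplit : F r (h r) - F s (h s) =
      (F r (h s) - F s (h s)) + (h r - h s) • dslope (F r) (h s) (h r) := by
    rw [sub_smul_dslope]; abel
  simp only [slope_def_module, hsplit, smul_add, smul_assoc]

lemma eq_of_transport {F : ℝ → ℂ → E} {V : ℝ → ℂ → ℂ} {h : ℝ → ℂ} {U : Set ℂ} {T M : ℝ}
    (hT : 0 ≤ T) (hU : IsOpen U)
    (hd : ∀ t ∈ Icc 0 T, DifferentiableOn ℂ (F t) U)
    (hM : ∀ t ∈ Icc 0 T, MapsTo (F t) U (closedBall 0 M))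
    (hF : ∀ z ∈ U, ∀ t ∈ Icc 0 T,
      HasDerivWithinAt (F · z) (V t z • deriv (F t) z) (Icc 0 T) t)
    (hhU : MapsTo h (Icc 0 T) U)
    (hh : ∀ r ∈ Icc 0 T, HasDerivWithinAt h (V (T - r) (h r)) (Icc 0 T) r) :
    F T (h 0) = F 0 (h T) := by
  have hrev := mapsTo_const_sub_Icc_zero T
  have hFrev : ∀ z ∈ U, ∀ r ∈ Icc 0 T, HasDerivWithinAt (fun r ↦ F (T - r) z)
      (-(V (T - r) z • deriv (F (T - r)) z)) (Icc 0 T) r := fun z hz r hr ↦ by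
    simpa [Function.comp_def] using (hF z hz (T - r) (hrev hr)).scomp r
      ((hasDerivWithinAt_id r (Icc 0 T)).const_sub T) hrev
  have hzero : ∀ r ∈ Icc 0 T, HasDerivWithinAt (fun r ↦ F (T - r) (h r)) 0 (Icc 0 T) r := by
    intro r hr
    obtain ⟨R, hR, hball⟩ := Metric.isOpen_iff.1 hU (h r) (hhU hr)
    simpa only [neg_add_cancel] using
      hasDerivWithinAt_apply_of_mapsTo_closedBall (F := fun r ↦ F (T - r)) hR hr
        (fun t ht ↦ (hd _ (hrev ht)).mono hball) (fun t ht ↦ (hM _ (hrev ht)).mono_left hball)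
        (fun z hz ↦ (hFrev z (hball hz) r hr).continuousWithinAt) (hFrev _ (hhU hr) r hr) (hh r hr)
  have hconst := constant_of_has_deriv_right_zero
    (fun r hr ↦ (hzero r hr).continuousWithinAt)
    (fun r hr ↦ (hzero r (Ico_subset_Icc_self hr)).mono_of_mem_nhdsWithin
      (Icc_mem_nhdsGE_of_mem hr)) T (right_mem_Icc.2 hT)
  simpa using hconst.symm

end BoundedHolomorphicFamilies

section HalfDisc

lemma mul_sqrt_le_integral_sqrt_sq_sub_sq (Y : ℝ) {v : ℝ} (hv : 0 ≤ v) :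
    v * √(Y ^ 2 - v ^ 2) ≤ ∫ w in 0..v, √(Y ^ 2 - w ^ 2) := by
  have hle : ∀ w ∈ Icc 0 v, √(Y ^ 2 - v ^ 2) ≤ √(Y ^ 2 - w ^ 2) := fun w hw ↦
    sqrt_le_sqrt (sub_le_sub_left (pow_le_pow_left₀ hw.1 hw.2 2) _)
  calc v * √(Y ^ 2 - v ^ 2) = ∫ _ in 0..v, √(Y ^ 2 - v ^ 2) := by simp
    _ ≤ ∫ w in 0..v, √(Y ^ 2 - w ^ 2) :=
      integral_mono_on hv (by simp) (Continuous.intervalIntegrable (by fun_prop) 0 v) hle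

lemma integral_zero_one_sqrt_one_sub_sq : ∫ w in (0 : ℝ)..1, √(1 - w ^ 2) = π / 4 := by
  have hsplit := integral_add_adjacent_intervals (a := -1) (b := 0) (c := 1)
    (f := fun w : ℝ ↦ √(1 - w ^ 2)) (μ := volume)
    (Continuous.intervalIntegrable (by fun_prop) _ _)
    (Continuous.intervalIntegrable (by fun_prop) _ _)
  have heven : ∫ w in (-1 : ℝ)..0, √(1 - w ^ 2) = ∫ w in (0 : ℝ)..1, √(1 - w ^ 2) := by
    have hneg := integral_comp_neg (a := 0) (b := 1) fun w : ℝ ↦ √(1 - w ^ 2)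
    simp only [neg_sq, neg_zero] at hneg
    exact hneg.symm
  rw [heven, integral_sqrt_one_sub_sq] at hsplit
  linarith

lemma integral_sqrt_sq_sub_sq {Y : ℝ} (hY : 0 ≤ Y) :
    ∫ w in 0..Y, √(Y ^ 2 - w ^ 2) = π / 4 * Y ^ 2 := by
  have hscale : ∀ w, √(Y ^ 2 - (Y * w) ^ 2) = Y * √(1 - w ^ 2) := fun w ↦ by
    rw [show Y ^ 2 - (Y * w) ^ 2 = Y ^ 2 * (1 - w ^ 2) by ring, sqrt_mul (sq_nonneg Y), sqrt_sq hY]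
  calc ∫ w in 0..Y, √(Y ^ 2 - w ^ 2) = Y * ∫ w in (0 : ℝ)..1, √(Y ^ 2 - (Y * w) ^ 2) := by
        rw [mul_integral_comp_mul_left (f := fun w ↦ √(Y ^ 2 - w ^ 2))]; simp
    _ = π / 4 * Y ^ 2 := by
        simp only [hscale, intervalIntegral.integral_const_mul, integral_zero_one_sqrt_one_sub_sq]
        ring

end HalfDisc

lemma le_div_sqrt_sub_of_mul_le_mul_sqrt {a b c : ℝ} (ha : 0 ≤ a) (hab : a < b) (hc : 0 ≤ c)
    (h : b * c ≤ a * √(1 + c ^ 2)) : c ≤ a / √(b ^ 2 - a ^ 2) := by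
  have hpos : 0 < b ^ 2 - a ^ 2 := sub_pos.2 (pow_lt_pow_left₀ hab ha two_ne_zero)
  have hsq : (b * c) ^ 2 ≤ a ^ 2 * (1 + c ^ 2) := by
    calc (b * c) ^ 2 ≤ (a * √(1 + c ^ 2)) ^ 2 :=
          pow_le_pow_left₀ (mul_nonneg (ha.trans hab.le) hc) h 2
      _ = a ^ 2 * (1 + c ^ 2) := by rw [mul_pow, sq_sqrt (by positivity)]
  rw [le_div_iff₀ (sqrt_pos.2 hpos)]
  refine le_of_sq_le_sq ?_ ha
  rw [mul_pow, sq_sqrt hpos.le]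
  linarith

lemma continuousOn_of_abs_sub_le_mul_sqrt {ξ : ℝ → ℝ} {S : Set ℝ} {σ : ℝ}
    (hξ : ∀ r ∈ S, ∀ u ∈ S, |ξ r - ξ u| ≤ σ * √|r - u|) : ContinuousOn ξ S := by
  intro u hu
  have hbound : ContinuousWithinAt (fun r ↦ σ * √|r - u|) S u :=
    Continuous.continuousWithinAt (by fun_prop)
  rw [ContinuousWithinAt, tendsto_iff_dist_tendsto_zero]
  refine squeeze_zero' (.of_forall fun _ ↦ dist_nonneg) ?_
    (by simpa [ContinuousWithinAt] using hbound)
  filter_upwards [self_mem_nhdsWithin] with r hr using hξ r hr u hu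

lemma exists_hasDerivWithinAt_Icc_of_lipschitzWith {E : Type*} [NormedAddCommGroup E]
    [NormedSpace ℝ E] [CompleteSpace E] {v : ℝ → E → E} {T : ℝ} {K L : NNReal} (hT : 0 ≤ T)
    (hlip : ∀ t ∈ Icc 0 T, LipschitzWith K (v t))
    (hcont : ∀ x, ContinuousOn (v · x) (Icc 0 T))
    (hL : ∀ t ∈ Icc 0 T, ∀ x, ‖v t x‖ ≤ L) (x₀ : E) :
    ∃ h : ℝ → E, h 0 = x₀ ∧ ∀ r ∈ Icc 0 T, HasDerivWithinAt h (v r (h r)) (Icc 0 T) r := by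
  have hpl : IsPicardLindelof v (⟨0, left_mem_Icc.2 hT⟩ : Icc 0 T) x₀ (L * T.toNNReal) 0 L K :=
    { lipschitzOnWith := fun t ht ↦ (hlip t ht).lipschitzOnWith
      continuousOn := fun x _ ↦ hcont x
      norm_le := fun t ht x _ ↦ hL t ht x
      mul_max_le := by simp [hT] }
  exact hpl.exists_eq_forall_mem_Icc_hasDerivWithinAt₀

lemma norm_le_of_norm_deriv_le_deriv {E : Type*} [NormedAddCommGroup E] [NormedSpace ℝ E]
    {g g' : ℝ → E} {B B' : ℝ → ℝ} {a b : ℝ}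
    (hg : ∀ u ∈ Icc a b, HasDerivWithinAt g (g' u) (Icc a b) u)
    (hB : ∀ u ∈ Icc a b, HasDerivWithinAt B (B' u) (Icc a b) u) (ha : ‖g a‖ ≤ B a)
    (hle : ∀ u ∈ Icc a b, ‖g' u‖ ≤ B' u) {r : ℝ} (hr : r ∈ Icc a b) : ‖g r‖ ≤ B r :=
  image_norm_le_of_norm_deriv_right_le_deriv_boundary'
    (fun u hu ↦ (hg u hu).continuousWithinAt)
    (fun u hu ↦ (hg u (Ico_subset_Icc_self hu)).mono_of_mem_nhdsWithin
      (Icc_mem_nhdsGE_of_mem hu)) ha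
    (fun u hu ↦ (hB u hu).continuousWithinAt)
    (fun u hu ↦ (hB u (Ico_subset_Icc_self hu)).mono_of_mem_nhdsWithin
      (Icc_mem_nhdsGE_of_mem hu))
    (fun u hu ↦ hle u (Ico_subset_Icc_self hu)) hr

lemma im_neg_two_div (w : ℂ) : (-(2 / w)).im = 2 * w.im / Complex.normSq w := by
  simp [Complex.div_im]

lemma re_neg_two_div (w : ℂ) : (-(2 / w)).re = -(2 * w.re / Complex.normSq w) := by
  simp [Complex.div_re]

/-- The nearest-point projection of `ℂ` onto the half-plane `{z | y ≤ Im z}`. It is used to extend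
the backward Loewner field from this half-plane to a globally Lipschitz field on `ℂ`. -/
def raiseIm (y : ℝ) (z : ℂ) : ℂ := ⟨z.re, max z.im y⟩

lemma raiseIm_of_le {y : ℝ} {z : ℂ} (hz : y ≤ z.im) : raiseIm y z = z :=
  Complex.ext rfl (max_eq_left hz)

lemma norm_raiseIm_sub_raiseIm_le (y : ℝ) (z w : ℂ) :
    ‖raiseIm y z - raiseIm y w‖ ≤ ‖z - w‖ := by
  have him : (max z.im y - max w.im y) ^ 2 ≤ (z.im - w.im) ^ 2 :=
    sq_le_sq.2 (abs_max_sub_max_le_abs z.im w.im y)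
  refine le_of_sq_le_sq ?_ (norm_nonneg _)
  simp only [Complex.sq_norm, Complex.normSq_apply, raiseIm, Complex.sub_re, Complex.sub_im]
  linarith

lemma le_im_raiseIm_sub_ofReal (y : ℝ) (z : ℂ) (u : ℝ) : y ≤ (raiseIm y z - u).im := by
  simp [raiseIm]

lemma le_norm_raiseIm_sub_ofReal (y : ℝ) (z : ℂ) (u : ℝ) : y ≤ ‖raiseIm y z - u‖ :=
  (le_im_raiseIm_sub_ofReal y z u).trans (Complex.im_le_norm _)

lemma raiseIm_sub_ofReal_ne_zero {y : ℝ} (hy : 0 < y) (z : ℂ) (u : ℝ) : raiseIm y z - u ≠ 0 :=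
  norm_pos_iff.1 (hy.trans_le (le_norm_raiseIm_sub_ofReal y z u))

lemma lipschitzWith_neg_two_div_raiseIm_sub {y : ℝ} (hy : 0 < y) (u : ℝ) :
    LipschitzWith (2 / y ^ 2).toNNReal fun z ↦ -(2 / (raiseIm y z - u)) := by
  refine LipschitzWith.of_dist_le_mul fun z w ↦ ?_
  rw [coe_toNNReal _ (by positivity), dist_neg_neg]
  have hz := le_norm_raiseIm_sub_ofReal y z u
  have hw := le_norm_raiseIm_sub_ofReal y w u
  have hproj := norm_raiseIm_sub_raiseIm_le y z w
  calc dist (2 / (raiseIm y z - u)) (2 / (raiseIm y w - u))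
      = 2 * (‖raiseIm y z - raiseIm y w‖ / (‖raiseIm y z - u‖ * ‖raiseIm y w - u‖)) := by
        rw [div_eq_mul_inv, div_eq_mul_inv, dist_eq_norm, ← mul_sub, norm_mul, Complex.norm_ofNat,
          ← dist_eq_norm, dist_inv_inv₀ (raiseIm_sub_ofReal_ne_zero hy z u)
            (raiseIm_sub_ofReal_ne_zero hy w u), dist_sub_right, dist_eq_norm]
    _ ≤ 2 * (‖z - w‖ / (y * y)) := by gcongr
    _ = 2 / y ^ 2 * dist z w := by rw [dist_eq_norm]; ring

/-- `h` solves on `[0, T]`, inside the upper half-plane, the backward Loewner equation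
`h' = -2 / (h - ξ)` with driving function `ξ`. -/
structure IsBackwardLoewnerFlow (ξ : ℝ → ℝ) (T : ℝ) (h : ℝ → ℂ) : Prop where
  im_pos : ∀ r ∈ Icc 0 T, 0 < (h r).im
  hasDerivWithinAt : ∀ r ∈ Icc 0 T, HasDerivWithinAt h (-(2 / (h r - ξ r))) (Icc 0 T) r

theorem exists_isBackwardLoewnerFlow {ξ : ℝ → ℝ} {T : ℝ} {z : ℂ} (hT : 0 ≤ T)
    (hξ : ContinuousOn ξ (Icc 0 T)) (hz : 0 < z.im) :
    ∃ h, h 0 = z ∧ IsBackwardLoewnerFlow ξ T h := by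
  let v : ℝ → ℂ → ℂ := fun t w ↦ -(2 / (raiseIm z.im w - ξ t))
  have hcont : ∀ w, ContinuousOn (v · w) (Icc 0 T) := fun w ↦
    (continuousOn_const.div
      (continuousOn_const.sub (Complex.continuous_ofReal.comp_continuousOn hξ))
      fun t _ ↦ raiseIm_sub_ofReal_ne_zero hz w (ξ t)).neg
  have hbound : ∀ t ∈ Icc 0 T, ∀ w, ‖v t w‖ ≤ (2 / z.im).toNNReal := fun t _ w ↦ by
    rw [coe_toNNReal _ (by positivity), norm_neg, norm_div, Complex.norm_ofNat]
    have := le_norm_raiseIm_sub_ofReal z.im w (ξ t)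
    gcongr
  obtain ⟨h, h0, hh⟩ := exists_hasDerivWithinAt_Icc_of_lipschitzWith hT
    (fun t _ ↦ lipschitzWith_neg_two_div_raiseIm_sub hz (ξ t)) hcont hbound z
  have him : ∀ r ∈ Icc 0 T, HasDerivWithinAt (fun s ↦ (h s).im) (v r (h r)).im (Icc 0 T) r :=
    fun r hr ↦ Complex.imCLM.hasFDerivAt.comp_hasDerivWithinAt r (hh r hr)
  have hmono : MonotoneOn (fun s ↦ (h s).im) (Icc 0 T) := by
    refine monotoneOn_of_hasDerivWithinAt_nonneg (convex_Icc 0 T)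
      (fun r hr ↦ (him r hr).continuousWithinAt)
      (fun r hr ↦ (him r (interior_subset hr)).mono interior_subset) fun r _ ↦ ?_
    have := hz.le.trans (le_im_raiseIm_sub_ofReal z.im (h r) (ξ r))
    have := Complex.normSq_nonneg (raiseIm z.im (h r) - ξ r)
    rw [im_neg_two_div]
    positivity
  have hge : ∀ r ∈ Icc 0 T, z.im ≤ (h r).im := fun r hr ↦ by
    simpa [h0] using hmono (left_mem_Icc.2 hT) hr hr.1
  refine ⟨h, h0, fun r hr ↦ hz.trans_le (hge r hr), fun r hr ↦ ?_⟩
  simpa only [v, raiseIm_of_le (hge r hr)] using hh r hr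

namespace IsBackwardLoewnerFlow

variable {ξ : ℝ → ℝ} {T : ℝ} {h : ℝ → ℂ}

lemma normSq_pos (hh : IsBackwardLoewnerFlow ξ T h) {r : ℝ} (hr : r ∈ Icc 0 T) :
    0 < Complex.normSq (h r - ξ r) :=
  Complex.normSq_pos.2 fun h0 ↦ (hh.im_pos r hr).ne' (by simpa using congrArg Complex.im h0)

lemma mono (hh : IsBackwardLoewnerFlow ξ T h) {s : ℝ} (hs : s ≤ T) :
    IsBackwardLoewnerFlow ξ s h where
  im_pos r hr := hh.im_pos r (Icc_subset_Icc_right hs hr)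
  hasDerivWithinAt r hr :=
    (hh.hasDerivWithinAt r (Icc_subset_Icc_right hs hr)).mono (Icc_subset_Icc_right hs)

lemma continuousOn (hh : IsBackwardLoewnerFlow ξ T h) : ContinuousOn h (Icc 0 T) :=
  fun r hr ↦ (hh.hasDerivWithinAt r hr).continuousWithinAt

lemma hasDerivWithinAt_im (hh : IsBackwardLoewnerFlow ξ T h) {r : ℝ} (hr : r ∈ Icc 0 T) :
    HasDerivWithinAt (fun s ↦ (h s).im) (2 * (h r).im / Complex.normSq (h r - ξ r))
      (Icc 0 T) r := by
  refine (Complex.imCLM.hasFDerivAt.comp_hasDerivWithinAt r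
    (hh.hasDerivWithinAt r hr)).congr_deriv ?_
  simp [Complex.imCLM_apply, im_neg_two_div, -Complex.neg_im]

lemma hasDerivWithinAt_re (hh : IsBackwardLoewnerFlow ξ T h) {r : ℝ} (hr : r ∈ Icc 0 T) :
    HasDerivWithinAt (fun s ↦ (h s).re) (-(2 * ((h r).re - ξ r) / Complex.normSq (h r - ξ r)))
      (Icc 0 T) r := by
  refine (Complex.reCLM.hasFDerivAt.comp_hasDerivWithinAt r
    (hh.hasDerivWithinAt r hr)).congr_deriv ?_
  simp [Complex.reCLM_apply, re_neg_two_div, -Complex.neg_re]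

lemma hasDerivWithinAt_re_sub_mul_im (hh : IsBackwardLoewnerFlow ξ T h) (a : ℝ) {r : ℝ}
    (hr : r ∈ Icc 0 T) :
    HasDerivWithinAt (fun s ↦ ((h s).re - a) * (h s).im)
      ((ξ r - a) * (2 * (h r).im / Complex.normSq (h r - ξ r))) (Icc 0 T) r := by
  refine (((hh.hasDerivWithinAt_re hr).sub_const a).mul
    (hh.hasDerivWithinAt_im hr)).congr_deriv ?_
  ring

lemma sub_le_of_normSq_le (hh : IsBackwardLoewnerFlow ξ T h) {K : ℝ}
    (hK : ∀ r ∈ Icc 0 T, Complex.normSq (h r - ξ r) ≤ K * (h r).im ^ 2) {r : ℝ}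
    (hr : r ∈ Icc 0 T) :
    T - r ≤ K / 4 * ((h T).im ^ 2 - (h r).im ^ 2) := by
  have hderiv : ∀ u ∈ Icc 0 T, HasDerivWithinAt (fun s ↦ K / 4 * (h s).im ^ 2 - s)
      (K * (h u).im ^ 2 / Complex.normSq (h u - ξ u) - 1) (Icc 0 T) u := fun u hu ↦ by
    refine ((((hh.hasDerivWithinAt_im hu).pow 2).const_mul (K / 4)).sub
      (hasDerivWithinAt_id u _)).congr_deriv ?_
    push_cast
    ring
  have hmono : MonotoneOn (fun s ↦ K / 4 * (h s).im ^ 2 - s) (Icc 0 T) :=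
    monotoneOn_of_hasDerivWithinAt_nonneg (convex_Icc 0 T)
      (fun u hu ↦ (hderiv u hu).continuousWithinAt)
      (fun u hu ↦ (hderiv u (interior_subset hu)).mono interior_subset) fun u hu ↦
        sub_nonneg.2 <| (one_le_div (hh.normSq_pos (interior_subset hu))).2
          (hK u (interior_subset hu))
  have := hmono hr (right_mem_Icc.2 (hr.1.trans hr.2)) hr.2
  dsimp only at this
  linarith

lemma abs_driving_sub_le (hh : IsBackwardLoewnerFlow ξ T h) {σ K : ℝ} (hσ : 0 ≤ σ)
    (hξ : ∀ r ∈ Icc 0 T, ∀ u ∈ Icc 0 T, |ξ r - ξ u| ≤ σ * √|r - u|)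
    (hK : ∀ r ∈ Icc 0 T, Complex.normSq (h r - ξ r) ≤ K * (h r).im ^ 2) {r : ℝ}
    (hr : r ∈ Icc 0 T) :
    |ξ r - ξ T| ≤ σ * √K / 2 * √((h T).im ^ 2 - (h r).im ^ 2) := by
  have hK0 : 0 ≤ K := nonneg_of_mul_nonneg_left
    ((Complex.normSq_nonneg _).trans (hK r hr)) (pow_pos (hh.im_pos r hr) 2)
  calc |ξ r - ξ T| ≤ σ * √|r - T| := hξ r hr T (right_mem_Icc.2 (hr.1.trans hr.2))
    _ ≤ σ * √(K / 2 ^ 2 * ((h T).im ^ 2 - (h r).im ^ 2)) := by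
      rw [abs_sub_comm, abs_of_nonneg (sub_nonneg.2 hr.2)]
      gcongr
      linarith [hh.sub_le_of_normSq_le hK hr]
    _ = σ * √K / 2 * √((h T).im ^ 2 - (h r).im ^ 2) := by
      rw [sqrt_mul (by positivity), sqrt_div hK0, sqrt_sq two_pos.le]
      ring

lemma abs_re_sub_mul_im_le (hh : IsBackwardLoewnerFlow ξ T h) {a c Y : ℝ} (hc : 0 ≤ c)
    (h0 : (h 0).re = ξ 0)
    (hξ : ∀ r ∈ Icc 0 T, |ξ r - a| ≤ c * √(Y ^ 2 - (h r).im ^ 2)) {r : ℝ} (hr : r ∈ Icc 0 T) :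
    |(h r).re - a| * (h r).im ≤ c * ∫ v in 0..(h r).im, √(Y ^ 2 - v ^ 2) := by
  have harea : ∀ x, HasDerivAt (fun x ↦ ∫ v in 0..x, √(Y ^ 2 - v ^ 2)) √(Y ^ 2 - x ^ 2) x :=
    fun x ↦ (Continuous.integral_hasStrictDerivAt (by fun_prop) 0 x).hasDerivAt
  have hstart : |((h 0).re - a) * (h 0).im| ≤ c * ∫ v in 0..(h 0).im, √(Y ^ 2 - v ^ 2) := by
    have h0mem : (0 : ℝ) ∈ Icc 0 T := left_mem_Icc.2 (hr.1.trans hr.2)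
    have hpos := (hh.im_pos 0 h0mem).le
    calc |((h 0).re - a) * (h 0).im| = |ξ 0 - a| * (h 0).im := by
          rw [abs_mul, abs_of_nonneg hpos, h0]
      _ ≤ c * √(Y ^ 2 - (h 0).im ^ 2) * (h 0).im :=
          mul_le_mul_of_nonneg_right (hξ 0 h0mem) hpos
      _ = c * ((h 0).im * √(Y ^ 2 - (h 0).im ^ 2)) := by ring
      _ ≤ c * ∫ v in 0..(h 0).im, √(Y ^ 2 - v ^ 2) :=
          mul_le_mul_of_nonneg_left (mul_sqrt_le_integral_sqrt_sq_sub_sq Y hpos) hc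
  have hbound := norm_le_of_norm_deriv_le_deriv
    (fun u hu ↦ hh.hasDerivWithinAt_re_sub_mul_im a hu)
    (fun u hu ↦ ((harea _).comp_hasDerivWithinAt u (hh.hasDerivWithinAt_im hu)).const_mul c)
    hstart (fun u hu ↦ by
      have hspeed : 0 ≤ 2 * (h u).im / Complex.normSq (h u - ξ u) :=
        div_nonneg (mul_nonneg two_pos.le (hh.im_pos u hu).le) (Complex.normSq_nonneg _)
      rw [norm_mul, norm_eq_abs, norm_of_nonneg hspeed, ← mul_assoc]
      exact mul_le_mul_of_nonneg_right (hξ u hu) hspeed) hr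
  rwa [norm_mul, norm_eq_abs, norm_of_nonneg (hh.im_pos r hr).le] at hbound

lemma abs_re_sub_le_of_normSq_le (hh : IsBackwardLoewnerFlow ξ T h) {σ K : ℝ} (hT : 0 ≤ T)
    (hσ : 0 ≤ σ) (hξ : ∀ r ∈ Icc 0 T, ∀ u ∈ Icc 0 T, |ξ r - ξ u| ≤ σ * √|r - u|)
    (h0 : (h 0).re = ξ 0)
    (hK : ∀ r ∈ Icc 0 T, Complex.normSq (h r - ξ r) ≤ K * (h r).im ^ 2) :
    |(h T).re - ξ T| ≤ π * σ / 8 * √K * (h T).im := by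
  have hTT : T ∈ Icc 0 T := right_mem_Icc.2 hT
  have hY : 0 < (h T).im := hh.im_pos T hTT
  refine le_of_mul_le_mul_right ?_ hY
  calc |(h T).re - ξ T| * (h T).im
      ≤ σ * √K / 2 * ∫ v in 0..(h T).im, √((h T).im ^ 2 - v ^ 2) :=
        hh.abs_re_sub_mul_im_le (by positivity) h0
          (fun r hr ↦ hh.abs_driving_sub_le hσ hξ hK hr) hTT
    _ = π * σ / 8 * √K * (h T).im * (h T).im := by
        rw [integral_sqrt_sq_sub_sq hY.le]
        ring

theorem abs_re_sub_le (hh : IsBackwardLoewnerFlow ξ T h) {σ : ℝ} (hT : 0 ≤ T) (hσ : 0 ≤ σ)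
    (hσ' : π * σ < 8) (hξ : ∀ r ∈ Icc 0 T, ∀ u ∈ Icc 0 T, |ξ r - ξ u| ≤ σ * √|r - u|)
    (h0 : (h 0).re = ξ 0) :
    |(h T).re - ξ T| ≤ π * σ / √(8 ^ 2 - (π * σ) ^ 2) * (h T).im := by
  have hcont : ContinuousOn (fun r ↦ |(h r).re - ξ r| / (h r).im) (Icc 0 T) :=
    (((Complex.continuous_re.comp_continuousOn hh.continuousOn).sub
      (continuousOn_of_abs_sub_le_mul_sqrt hξ)).abs).div
      (Complex.continuous_im.comp_continuousOn hh.continuousOn) fun r hr ↦ (hh.im_pos r hr).ne'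
  obtain ⟨s, hs, hmax⟩ := isCompact_Icc.exists_isMaxOn ⟨T, right_mem_Icc.2 hT⟩ hcont
  set C := |(h s).re - ξ s| / (h s).im
  have hC0 : 0 ≤ C := div_nonneg (abs_nonneg _) (hh.im_pos s hs).le
  have hcone : ∀ r ∈ Icc 0 T, |(h r).re - ξ r| ≤ C * (h r).im := fun r hr ↦
    (div_le_iff₀ (hh.im_pos r hr)).1 (hmax hr)
  have hsub : Icc 0 s ⊆ Icc 0 T := Icc_subset_Icc_right hs.2
  have hnormSq : ∀ r ∈ Icc 0 s, Complex.normSq (h r - ξ r) ≤ (1 + C ^ 2) * (h r).im ^ 2 := by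
    intro r hr
    have hsq := pow_le_pow_left₀ (abs_nonneg _) (hcone r (hsub hr)) 2
    rw [sq_abs] at hsq
    simp only [Complex.normSq_apply, Complex.sub_re, Complex.sub_im, Complex.ofReal_re,
      Complex.ofReal_im]
    linarith
  have hself : C ≤ π * σ / 8 * √(1 + C ^ 2) :=
    (div_le_iff₀ (hh.im_pos s hs)).2 <| (hh.mono hs.2).abs_re_sub_le_of_normSq_le hs.1 hσ
      (fun r hr u hu ↦ hξ r (hsub hr) u (hsub hu)) h0 hnormSq
  have hCle : C ≤ π * σ / √(8 ^ 2 - (π * σ) ^ 2) :=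
    le_div_sqrt_sub_of_mul_le_mul_sqrt (by positivity) hσ' hC0 (by linarith)
  exact (hcone T (right_mem_Icc.2 hT)).trans
    (mul_le_mul_of_nonneg_right hCle (hh.im_pos T (right_mem_Icc.2 hT)).le)

end IsBackwardLoewnerFlow

lemma norm_inv_add_I_le_one {w : ℂ} (hw : 0 ≤ w.im) : ‖(w + Complex.I)⁻¹‖ ≤ 1 := by
  have him : 1 ≤ (w + Complex.I).im := by simpa using hw
  rw [norm_inv]
  exact inv_le_one_of_one_le₀ (him.trans (Complex.im_le_norm _))

/-- The family `f t` of holomorphic self-maps of the upper half-plane, started at the identity,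
solves on `[0, T]` the Loewner equation `∂ₜ f = -2 / (z - ξ t) * ∂_z f` with driving function `ξ`.
Univalence of the maps `f t` is not made part of the notion. -/
structure IsLoewnerChain (ξ : ℝ → ℝ) (T : ℝ) (f : ℝ → ℂ → ℂ) : Prop where
  differentiableOn : ∀ t ∈ Icc 0 T, DifferentiableOn ℂ (f t) {z : ℂ | 0 < z.im}
  mapsTo : ∀ t ∈ Icc 0 T, MapsTo (f t) {z : ℂ | 0 < z.im} {z : ℂ | 0 < z.im}
  zero_apply : ∀ z : ℂ, 0 < z.im → f 0 z = z
  hasDerivWithinAt : ∀ z : ℂ, 0 < z.im → ∀ t ∈ Icc 0 T,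
    HasDerivWithinAt (f · z) (-(2 / (z - ξ t)) * deriv (f t) z) (Icc 0 T) t

namespace IsLoewnerChain

variable {ξ : ℝ → ℝ} {T : ℝ} {f : ℝ → ℂ → ℂ}

lemma mono (hf : IsLoewnerChain ξ T f) {s : ℝ} (hs : s ≤ T) : IsLoewnerChain ξ s f where
  differentiableOn t ht := hf.differentiableOn t (Icc_subset_Icc_right hs ht)
  mapsTo t ht := hf.mapsTo t (Icc_subset_Icc_right hs ht)
  zero_apply := hf.zero_apply
  hasDerivWithinAt z hz t ht :=
    (hf.hasDerivWithinAt z hz t (Icc_subset_Icc_right hs ht)).mono (Icc_subset_Icc_right hs)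

lemma add_I_ne_zero (hf : IsLoewnerChain ξ T f) {t : ℝ} (ht : t ∈ Icc 0 T) {z : ℂ}
    (hz : 0 < z.im) : f t z + Complex.I ≠ 0 := fun h0 ↦ by
  have him : 0 < (f t z).im := hf.mapsTo t ht hz
  have := congrArg Complex.im h0
  simp only [Complex.add_im, Complex.I_im, Complex.zero_im] at this
  linarith

-- Composing with `w ↦ (w + i)⁻¹` makes the chain bounded, as `eq_of_transport` requires.
lemma apply_backwardFlow (hf : IsLoewnerChain ξ T f) (hT : 0 ≤ T) {h : ℝ → ℂ}
    (hh : IsBackwardLoewnerFlow (fun r ↦ ξ (T - r)) T h) : f T (h 0) = h T := by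
  have hopen : IsOpen {z : ℂ | 0 < z.im} := isOpen_lt continuous_const Complex.continuous_im
  have hinv : (f T (h 0) + Complex.I)⁻¹ = (f 0 (h T) + Complex.I)⁻¹ := by
    refine eq_of_transport (F := fun t z ↦ (f t z + Complex.I)⁻¹)
      (V := fun t z ↦ -(2 / (z - ξ t))) hT hopen (fun t ht ↦ ?_) (M := 1) (fun t ht z hz ↦ ?_)
      (fun z hz t ht ↦ ?_) hh.im_pos hh.hasDerivWithinAt
    · exact ((hf.differentiableOn t ht).add_const _).inv fun z hz ↦ hf.add_I_ne_zero ht hz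
    · exact mem_closedBall_zero_iff.2 (norm_inv_add_I_le_one (hf.mapsTo t ht hz).le)
    · have hne := hf.add_I_ne_zero ht hz
      have hz' := ((hf.differentiableOn t ht).differentiableAt (hopen.mem_nhds hz)).hasDerivAt
      rw [((hz'.add_const Complex.I).fun_inv hne).deriv]
      refine (((hf.hasDerivWithinAt z hz t ht).add_const Complex.I).fun_inv hne).congr_deriv ?_
      rw [smul_eq_mul]
      ring
  simpa only [add_left_inj, hf.zero_apply _ (hh.im_pos T (right_mem_Icc.2 hT))]
    using inv_injective hinv

theorem abs_re_sub_le (hf : IsLoewnerChain ξ T f) {σ y : ℝ} (hT : 0 ≤ T) (hσ : 0 ≤ σ)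
    (hσ' : π * σ < 8) (hξ : ∀ r ∈ Icc 0 T, ∀ u ∈ Icc 0 T, |ξ r - ξ u| ≤ σ * √|r - u|)
    (hy : 0 < y) :
    |(f T (ξ T + y * Complex.I)).re - ξ 0| ≤
      π * σ / √(8 ^ 2 - (π * σ) ^ 2) * (f T (ξ T + y * Complex.I)).im := by
  have hrev := mapsTo_const_sub_Icc_zero T
  have hξrev : ∀ r ∈ Icc 0 T, ∀ u ∈ Icc 0 T, |ξ (T - r) - ξ (T - u)| ≤ σ * √|r - u| := by
    intro r hr u hu
    simpa only [sub_sub_sub_cancel_left, abs_sub_comm u r] using hξ _ (hrev hr) _ (hrev hu)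
  obtain ⟨h, h0, hh⟩ := exists_isBackwardLoewnerFlow hT
    (continuousOn_of_abs_sub_le_mul_sqrt hξrev) (z := ξ T + y * Complex.I) (by simpa using hy)
  rw [← h0, hf.apply_backwardFlow hT hh]
  simpa only [sub_self] using hh.abs_re_sub_le hT hσ hσ' hξrev (by simp [h0])

end IsLoewnerChain

/-- Cone theorem for Loewner curves, range `0 < σ < 8/π`: the curve stays in the cone
`{|Re z| ≤ (πσ/√(64−π²σ²)) · Im z}`. -/
theorem loewner_curve_cone_bound_small_sigma
    (σ : ℝ) (hσ0 : 0 < σ)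
    (dr : ℝ → ℝ) (hdrcont : ContinuousOn dr (Icc 0 1)) (hdr0 : dr 0 = 0)
    (hdrlip : ∀ s ∈ Icc (0 : ℝ) 1, ∀ u ∈ Icc (0 : ℝ) 1,
      |dr u - dr s| ≤ σ * Real.sqrt |u - s|)
    (f : ℝ → ℂ → ℂ)
    (hf_inj : ∀ u ∈ Icc (0 : ℝ) 1, InjOn (f u) {z : ℂ | 0 < z.im})
    (hf_holo : ∀ u ∈ Icc (0 : ℝ) 1, DifferentiableOn ℂ (f u) {z : ℂ | 0 < z.im})
    (hf_maps : ∀ u ∈ Icc (0 : ℝ) 1, MapsTo (f u) {z : ℂ | 0 < z.im} {z : ℂ | 0 < z.im})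
    (hf_zero : ∀ z : ℂ, 0 < z.im → f 0 z = z)
    (hf_ode : ∀ z : ℂ, 0 < z.im → ∀ u ∈ Icc (0 : ℝ) 1,
      HasDerivWithinAt (fun s => f s z)
        (-(2 / (z - (dr u : ℂ))) * deriv (f u) z) (Icc (0 : ℝ) 1) u)
    (γ : ℝ → ℂ) (hγcont : ContinuousOn γ (Icc 0 1))
    (hγlim : ∀ u ∈ Icc (0 : ℝ) 1,
      Filter.Tendsto (fun y : ℝ => f u ((dr u : ℂ) + y * Complex.I))
        (nhdsWithin 0 (Ioi (0 : ℝ))) (nhds (γ u)))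
    (hσ8 : σ < 8 / Real.pi) :
    ∀ u ∈ Icc (0 : ℝ) 1,
      |(γ u).re| ≤ Real.pi * σ / Real.sqrt (64 - Real.pi ^ 2 * σ ^ 2) * (γ u).im := by
  have hchain : IsLoewnerChain dr 1 f := ⟨hf_holo, hf_maps, hf_zero, hf_ode⟩
  have hσπ : π * σ < 8 := by rwa [mul_comm, ← lt_div_iff₀ pi_pos]
  intro u hu
  have hsub : Icc 0 u ⊆ Icc 0 1 := Icc_subset_Icc_right hu.2
  have hcone : ∀ y : ℝ, 0 < y → |(f u (dr u + y * Complex.I)).re| ≤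
      π * σ / √(64 - π ^ 2 * σ ^ 2) * (f u (dr u + y * Complex.I)).im := fun y hy ↦ by
    have := (hchain.mono hu.2).abs_re_sub_le hu.1 hσ0.le hσπ
      (fun r hr s hs ↦ hdrlip s (hsub hs) r (hsub hr)) hy
    rwa [hdr0, sub_zero, mul_pow, show (8 : ℝ) ^ 2 = 64 by norm_num] at this
  have hclosed : IsClosed {w : ℂ | |w.re| ≤ π * σ / √(64 - π ^ 2 * σ ^ 2) * w.im} :=
    isClosed_le (by fun_prop) (by fun_prop)
  refine hclosed.mem_of_tendsto (hγlim u hu) ?_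
  filter_upwards [self_mem_nhdsWithin] with y hy using hcone y hy
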